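/- Let m and n be nonnegative integers with m+n ≥ 2. Then for every pair of positions 1 ≤ a < b ≤ m+n, the signed count ∑_{σ ∈ W(m,n)} (−1)^{σ(a)+σ(b)} is independent of a and b and equals the integer d determined by m!·n!·d = (m+n−2)!·(m² − m + n² − n − 2mn). (This is the combinatorial content of the homogeneity theorem: the total exponent of each factor in the product of the Pandharipande–Thomas partition functions over all crepant resolutions of the generalised conifold C_{m,n} is −k·d.) -/

import Mathlib

open Finset

/-- `W L m n` is the set of binary words `σ : Fin L → Fin 2` taking the value `0`
exactly `m` times and the value `1` exactly `n` times.  For `L = m + n` these encode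
the crepant resolutions of the generalised conifold `C_{m,n}`. -/
def W (L m n : ℕ) : Finset (Fin L → Fin 2) :=
  Finset.univ.filter (fun σ =>
    (Finset.univ.filter (fun i => σ i = 0)).card = m ∧
    (Finset.univ.filter (fun i => σ i = 1)).card = n)

theorem W_card (m n : ℕ) : (W (m + n) m n).card = (m + n).choose m := by
  have h : (W (m + n) m n).card = ((Finset.univ : Finset (Fin (m + n))).powersetCard m).card := by
    refine Finset.card_nbij' (fun σ => Finset.univ.filter (fun i => σ i = 0))
      (fun s i => if i ∈ s then 0 else 1) ?_ ?_ ?_ ?_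
    · intro σ hσ
      simp only [W, Finset.coe_filter, Set.mem_ofPred_eq, Finset.mem_univ, true_and] at hσ
      simp [Finset.mem_powersetCard, hσ.1]
    · intro s hs
      simp only [Finset.mem_coe, Finset.mem_powersetCard, Finset.subset_univ, true_and] at hs
      have h1 : (Finset.univ.filter (fun i => i ∉ s)).card = n := by
        have := Finset.card_compl s
        rw [Finset.compl_eq_univ_sdiff, Finset.sdiff_eq_filter] at this
        rw [this, hs, Fintype.card_fin]; omega
      simp [W, hs, h1]
    · intro σ hσ
      funext i
      have : σ i = 0 ∨ σ i = 1 := by omega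
      rcases this with h | h <;> simp [h]
    · intro s hs
      ext i
      simp
  rw [h, Finset.card_powersetCard, Finset.card_univ, Fintype.card_fin]

theorem W_sum (m n : ℕ) (σ : Fin (m + n) → Fin 2) (hσ : σ ∈ W (m + n) m n) :
    ∑ i, (-1 : ℤ) ^ (σ i : ℕ) = m - n := by
  simp only [W, Finset.mem_filter, Finset.mem_univ, true_and] at hσ
  have h : ∀ i, (-1 : ℤ) ^ (σ i : ℕ) = (if σ i = 0 then 1 else 0) - (if σ i = 1 then 1 else 0) := by
    intro i
    have : σ i = 0 ∨ σ i = 1 := by omega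
    rcases this with h | h <;> simp [h]
  simp only [h, Finset.sum_sub_distrib, Finset.sum_boole, hσ.1, hσ.2]

theorem W_perm (L m n : ℕ) (p : Equiv.Perm (Fin L)) (a b : Fin L) :
    ∑ σ ∈ W L m n, (-1 : ℤ) ^ ((σ (p a) : ℕ) + (σ (p b) : ℕ)) =
      ∑ σ ∈ W L m n, (-1 : ℤ) ^ ((σ a : ℕ) + (σ b : ℕ)) := by
  refine Finset.sum_equiv (Equiv.arrowCongr p.symm (Equiv.refl _)) ?_ ?_
  · intro σ
    have h : ∀ c : Fin 2, (Finset.univ.filter (fun i => σ (p i) = c)).card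
        = (Finset.univ.filter (fun i => σ i = c)).card := by
      intro c
      refine Finset.card_equiv p ?_
      intro i
      simp
    simp [W, h]
  · intro σ _
    simp

theorem W_pair (L m n : ℕ) (a b c d : Fin L) (hab : a ≠ b) (hcd : c ≠ d) :
    ∑ σ ∈ W L m n, (-1 : ℤ) ^ ((σ c : ℕ) + (σ d : ℕ)) =
      ∑ σ ∈ W L m n, (-1 : ℤ) ^ ((σ a : ℕ) + (σ b : ℕ)) := by
  have h1 : Equiv.swap a c b ≠ c := by
    intro h
    apply hab
    apply (Equiv.swap a c).injective
    rw [h, Equiv.swap_apply_left]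
  have := W_perm L m n (Equiv.swap (Equiv.swap a c b) d * Equiv.swap a c) a b
  rw [← this]
  simp only [Equiv.Perm.mul_apply, Equiv.swap_apply_left]
  rw [Equiv.swap_apply_of_ne_of_ne h1.symm hcd]

/-- For `m + n ≥ 2`, the signed count `∑_{σ ∈ W(m,n)} (−1)^{σ(a)+σ(b)}` over all words
encoding crepant resolutions of `C_{m,n}` is, for every pair of positions `a < b`,
equal to the integer `d` determined by
`m!·n!·d = (m+n−2)!·(m² − m + n² − n − 2mn)`; in particular it is independent of `a, b`. -/
theorem signed_count_eq_degree (m n : ℕ) (h2 : 2 ≤ m + n)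
    (d : ℤ)
    (hd : (m.factorial : ℤ) * (n.factorial : ℤ) * d
        = ((m + n - 2).factorial : ℤ) *
            ((m : ℤ) ^ 2 - (m : ℤ) + (n : ℤ) ^ 2 - (n : ℤ) - 2 * (m : ℤ) * (n : ℤ)))
    (a b : Fin (m + n)) (hab : a < b) :
    ∑ σ ∈ W (m + n) m n, (-1 : ℤ) ^ ((σ a : ℕ) + (σ b : ℕ)) = d := by
  set S := ∑ σ ∈ W (m + n) m n, (-1 : ℤ) ^ ((σ a : ℕ) + (σ b : ℕ)) with hS
  have hne : a ≠ b := hab.ne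
  have hW : ∀ c e : Fin (m + n),
      ∑ σ ∈ W (m + n) m n, (-1 : ℤ) ^ ((σ c : ℕ) + (σ e : ℕ))
        = S + if c = e then ((W (m + n) m n).card : ℤ) - S else 0 := by
    intro c e
    by_cases hce : c = e
    · subst hce
      simp [← two_mul, pow_mul]
    · simp [hce, hS, W_pair (m + n) m n a b c e hne hce]
  have h1 : ∑ c : Fin (m + n), ∑ e : Fin (m + n),
      ∑ σ ∈ W (m + n) m n, (-1 : ℤ) ^ ((σ c : ℕ) + (σ e : ℕ))
        = (W (m + n) m n).card * ((m : ℤ) - n) ^ 2 := by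
    have : ∀ c : Fin (m + n), ∑ e : Fin (m + n),
      ∑ σ ∈ W (m + n) m n, (-1 : ℤ) ^ ((σ c : ℕ) + (σ e : ℕ)) =
      ∑ σ ∈ W (m + n) m n, ∑ e : Fin (m + n), (-1 : ℤ) ^ ((σ c : ℕ) + (σ e : ℕ)) :=
      fun c => Finset.sum_comm
    simp only [this]
    rw [Finset.sum_comm, ← nsmul_eq_mul]
    refine Finset.sum_eq_card_nsmul ?_
    intro σ hσ
    simp only [pow_add]
    rw [← Finset.sum_mul_sum, W_sum m n σ hσ, sq]
  simp only [hW, Finset.sum_add_distrib, Finset.sum_ite_eq, Finset.mem_univ, if_true,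
    Finset.sum_const, Finset.card_univ, Fintype.card_fin, nsmul_eq_mul] at h1
  rw [W_card] at h1
  have hc : (((m + n).choose m : ℕ) : ℤ) * m.factorial * n.factorial = (m + n).factorial := by
    have := Nat.add_choose_mul_factorial_mul_factorial m n
    rw [← Nat.choose_symm_add] at this
    exact_mod_cast this
  obtain ⟨k, hk⟩ : ∃ k, m + n = k + 2 := ⟨m + n - 2, by omega⟩
  have hf : ((m + n).factorial : ℤ) = ((m : ℤ) + n) * ((m : ℤ) + n - 1) * (m + n - 2).factorial := by
    have hz : (m : ℤ) + n = k + 2 := by exact_mod_cast hk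
    rw [hz, hk, Nat.add_sub_cancel, Nat.factorial_succ, Nat.factorial_succ]
    push_cast
    ring
  have hz : (2 : ℤ) ≤ (m : ℤ) + n := by exact_mod_cast h2
  have hm : (m.factorial : ℤ) ≠ 0 := by exact_mod_cast m.factorial_ne_zero
  have hn : (n.factorial : ℤ) ≠ 0 := by exact_mod_cast n.factorial_ne_zero
  have hx : ((m : ℤ) + n) * ((m : ℤ) + n - 1) ≠ 0 :=
    mul_ne_zero (by omega) (by omega)
  rw [hf] at hc
  push_cast at h1
  apply mul_left_cancel₀ (mul_ne_zero hx (mul_ne_zero hm hn))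
  linear_combination (m.factorial : ℤ) * n.factorial * h1 + (((m : ℤ) - n) ^ 2 - (m + n)) * hc
    - ((m : ℤ) + n) * ((m : ℤ) + n - 1) * hd
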